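/- Let a be an object of the Weyl groupoid of a Cartan scheme with finite root system. Then Hom(−, a) under the right weak order is a meet semilattice: every finite non-empty subset has a meet. Since Hom(−,a) is finite with a unique maximal element, it is in fact a lattice. -/

import Mathlib

/-!
A morphism `w` with target `a` has an inversion set `N(w)`, the positive roots at `a` made negative
by `w⁻¹`. The theorem follows by replacing the weak order with containment of inversion sets.

* A simple reflection `σ_i` permutes the positive roots other than `α_i`, so appending `σ_i` to `w`
  adds one root to `N(w)` or removes one (`inv_snoc_pos`, `ncard_snoc_neg`). Moreover `N(g⁻¹f)` is,
  up to signs, the symmetric difference of `N(f)` and `N(g)` (`ncard_inv_mul`).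
* In rank two, the alternating words in `i` and `j` gain an inversion with every letter until all
  `m` positive roots in the span of `α_i` and `α_j` are inverted (`alt_main`). The two alternating
  words of length `m` have the same source by (R4). Their quotient preserves positive roots, fixes
  the coordinates off `i` and `j`, and is a product of an even number of reflections; hence it is
  the identity (`altX_comm`).
* Suppose a word for `f` has as many letters as `f` has inversions, and `f α_i < 0`. Then
  `fσ_i` has a word with one letter fewer (`exchange`). If the last letter is `j ≠ i`, one descends
  `m` times from `f` along `j, i, j, …`, each step being an instance of the induction hypothesis,
  and climbs back along the other side of the Coxeter relation. Hence the length of `w` is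
  `|N(w)|`, and `w` is determined by `N(w)` and its target.
* Since the length of `u⁻¹w` is the size of the symmetric difference of `N(u)` and `N(w)`,
  `u ≤ w` holds exactly when `N(u) ⊆ N(w)` (`weakLe_iff`).
* Two covers `uσ_i`, `uσ_j` of `u` have a join, `u` times the alternating word of length `m`
  (`local_join`). By the argument of Björner, Edelman and Ziegler, in a finite poset with least
  element such local joins yield all binary joins (`exists_join_above`). The set `Hom(-, a)` is
  finite, and a meet is the join of the lower bounds.
-/

set_option linter.unusedSectionVars false

/-- A Cartan scheme `C = C(I, A, (ρ_i), (C^a))`. -/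
structure CartanScheme (I A : Type) [Fintype I] [DecidableEq I] [Fintype A] [Nonempty A] where
  ρ : I → A → A
  c : A → I → I → ℤ
  ρ_invol : ∀ i a, ρ i (ρ i a) = a
  c_diag : ∀ a i, c a i i = 2
  c_offdiag_nonpos : ∀ a i j, i ≠ j → c a i j ≤ 0
  c_zero_symm : ∀ a i j, c a i j = 0 → c a j i = 0
  c_rho : ∀ a i j, c (ρ i a) i j = c a i j

namespace CartanScheme

variable {I A : Type} [Fintype I] [DecidableEq I] [Fintype A] [Nonempty A] [DecidableEq A]
variable (C : CartanScheme I A)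

/-- The simple reflection `σ_i^a` as a map `ℤ^I → ℤ^I`, `σ_i^a(α_j) = α_j - c^a_{ij} α_i`. -/
def sigma (a : A) (i : I) : (I → ℤ) → (I → ℤ) :=
  fun v k => v k - (if k = i then ∑ j, C.c a i j * v j else 0)

/-- Target object of the word `[i_1, …, i_k]` read at source object `a`:
`ρ_{i_1} ⋯ ρ_{i_k}(a)`. -/
def wordTarget (a : A) : List I → A
  | [] => a
  | i :: l => C.ρ i (wordTarget a l)

/-- The map `σ_{i_1} ⋯ σ_{i_k}^a : ℤ^I → ℤ^I` determined by a word with source `a`. -/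
def wordMap (a : A) : List I → ((I → ℤ) → (I → ℤ))
  | [] => id
  | i :: l => C.sigma (C.wordTarget a l) i ∘ wordMap a l

theorem wordTarget_append (a : A) (l₁ l₂ : List I) :
    C.wordTarget a (l₁ ++ l₂) = C.wordTarget (C.wordTarget a l₂) l₁ := by
  induction l₁ with
  | nil => rfl
  | cons i l ih => simp [wordTarget, ih]

theorem wordMap_append (a : A) (l₁ l₂ : List I) :
    C.wordMap a (l₁ ++ l₂) = C.wordMap (C.wordTarget a l₂) l₁ ∘ C.wordMap a l₂ := by
  induction l₁ with
  | nil => rfl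
  | cons i l ih => simp [wordMap, ih, wordTarget_append, Function.comp_assoc]

/-- A morphism of the Weyl groupoid `W(C)`: a source object, a target object, and a map
`ℤ^I → ℤ^I` which is a composition of simple reflections along some word. -/
@[ext]
structure Mor where
  src : A
  tgt : A
  toFun : (I → ℤ) → (I → ℤ)
  spec : ∃ l : List I, C.wordTarget src l = tgt ∧ C.wordMap src l = toFun

variable {C}

/-- A word realizes a morphism. -/
def Realizes (w : Mor C) (l : List I) : Prop :=
  C.wordTarget w.src l = w.tgt ∧ C.wordMap w.src l = w.toFun

variable (C)

/-- The identity morphism `id^a`. -/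
def idMor (a : A) : Mor C := ⟨a, a, id, ⟨[], rfl, rfl⟩⟩

/-- The generator `σ_i^a ∈ Hom(a, ρ_i(a))`. -/
def genMor (i : I) (a : A) : Mor C :=
  ⟨a, C.ρ i a, C.sigma a i, ⟨[i], rfl, Function.comp_id _⟩⟩

/-- The simple reflection with target `a`, i.e. `id^a σ_i = σ_i^{ρ_i(a)} ∈ Hom(ρ_i(a), a)`. -/
def sgen (a : A) (i : I) : Mor C :=
  { src := C.ρ i a, tgt := a, toFun := C.sigma (C.ρ i a) i,
    spec := ⟨[i], by simp [wordTarget, C.ρ_invol], Function.comp_id _⟩ }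

variable {C}

/-- Composition `u ∘ v` (with `v` applied first); junk value `u` if not composable. -/
def Mor.comp (u v : Mor C) : Mor C :=
  if h : v.tgt = u.src then
    { src := v.src, tgt := u.tgt, toFun := u.toFun ∘ v.toFun,
      spec := by
        obtain ⟨lu, hu1, hu2⟩ := u.spec
        obtain ⟨lv, hv1, hv2⟩ := v.spec
        refine ⟨lu ++ lv, ?_, ?_⟩
        · rw [C.wordTarget_append, hv1, h, hu1]
        · rw [C.wordMap_append, hv1, h, hu2, hv2] }
  else u

/-- Length of a morphism: minimal length of a realizing word. -/
noncomputable def len (w : Mor C) : ℕ := sInf {k | ∃ l : List I, Realizes w l ∧ l.length = k}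

/-- A reduced decomposition. -/
def IsReduced (w : Mor C) (l : List I) : Prop := Realizes w l ∧ l.length = len w

/-- The (right) weak order: `u ≤_R uv` iff `ℓ(uv) = ℓ(u) + ℓ(v)`. -/
def weakLe (u w : Mor C) : Prop :=
  ∃ v : Mor C, v.tgt = u.src ∧ w = u.comp v ∧ len w = len u + len v

/-- Membership in the parabolic subgroupoid `W_J(C)`. -/
def InParabolic (J : Set I) (w : Mor C) : Prop :=
  ∃ l : List I, (∀ i ∈ l, i ∈ J) ∧ Realizes w l

/-- Length with respect to the generators `σ_j`, `j ∈ J`. -/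
noncomputable def lenPar (J : Set I) (w : Mor C) : ℕ :=
  sInf {k | ∃ l : List I, (∀ i ∈ l, i ∈ J) ∧ Realizes w l ∧ l.length = k}

/-- The set of letters occurring in some reduced decomposition of `w`;
by the theorem on reduced decompositions this is the set `J(w)`. -/
def Jset (w : Mor C) : Set I := {i | ∃ l : List I, IsReduced w l ∧ i ∈ l}

variable (C)

/-- The set of real roots at the object `a`. -/
def roots (a : A) : Set (I → ℤ) :=
  {α | ∃ (b : A) (l : List I) (j : I),
    C.wordTarget b l = a ∧ α = C.wordMap b l (Pi.single j 1)}

/-- The set of positive (real) roots at `a`. -/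
def posRoots (a : A) : Set (I → ℤ) := {α ∈ C.roots a | ∀ i, 0 ≤ α i}

/-- `R^re(C)` is a finite root system of type `C`: axioms (R1), (R2), (R4) and finiteness
((R3) holds automatically for real roots). -/
def IsFRS : Prop :=
  (∀ a : A, (C.roots a).Finite) ∧
  (∀ (a : A) (α : I → ℤ), α ∈ C.roots a → (∀ i, 0 ≤ α i) ∨ (∀ i, α i ≤ 0)) ∧
  (∀ (a : A) (i : I) (α : I → ℤ), α ∈ C.roots a → (∃ z : ℤ, α = z • Pi.single i 1) →
    α = Pi.single i 1 ∨ α = -Pi.single i 1) ∧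
  (∀ (a : A) (i j : I), i ≠ j →
    (fun x => C.ρ i (C.ρ j x))^[(C.roots a ∩
      {α | ∃ m n : ℕ, α = (m : ℤ) • Pi.single i 1 + (n : ℤ) • Pi.single j 1}).ncard] a = a)

variable {C}

/-- `I_L(w)`: the set of simple reflections with target `w.tgt` below `w` in weak order. -/
def IL (w : Mor C) : Set I := {i | weakLe (sgen C w.tgt i) w}

/-- `m` is the longest element of `Hom(-,a) ∩ W_J(C)`, i.e. `w_J` at the object `a`. -/
def IsLongestPar (a : A) (J : Set I) (m : Mor C) : Prop :=
  m.tgt = a ∧ InParabolic J m ∧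
    ∀ x : Mor C, x.tgt = a → InParabolic J x → weakLe x m

/-- `m` is the longest element `w_I` of `Hom(-,a)`. -/
def IsLongestAt (a : A) (m : Mor C) : Prop :=
  m.tgt = a ∧ ∀ x : Mor C, x.tgt = a → weakLe x m

/-- `z` is the meet of `x` and `y` in `(Hom(-,a), ≤_R)`. -/
def IsMeet (a : A) (x y z : Mor C) : Prop :=
  z.tgt = a ∧ weakLe z x ∧ weakLe z y ∧
    ∀ t : Mor C, t.tgt = a → weakLe t x → weakLe t y → weakLe t z

/-- `z` is the join of `x` and `y` in `(Hom(-,a), ≤_R)`. -/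
def IsJoin (a : A) (x y z : Mor C) : Prop :=
  z.tgt = a ∧ weakLe x z ∧ weakLe y z ∧
    ∀ t : Mor C, t.tgt = a → weakLe x t → weakLe y t → weakLe z t

/-- The left coset `u W_J(C) ⊆ Hom(-, u.tgt)`. -/
def leftCoset (u : Mor C) (J : Set I) : Set (Mor C) :=
  {x | ∃ v : Mor C, InParabolic J v ∧ v.tgt = u.src ∧ x = u.comp v}

end CartanScheme

variable {I A : Type} [Fintype I] [DecidableEq I] [Fintype A] [Nonempty A] [DecidableEq A]

open CartanScheme

namespace CartanScheme

/-! ### Simple reflections as linear automorphisms, and their products -/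

/-- The group of linear automorphisms of `ℤ^I`. -/
abbrev LAut (I : Type) := (I → ℤ) ≃ₗ[ℤ] (I → ℤ)

/-- The simple root `α_i`. -/
abbrev sr (i : I) : I → ℤ := Pi.single i 1

theorem sigma_eq (C : CartanScheme I A) (a : A) (i : I) (v : I → ℤ) :
    C.sigma a i v = v - (∑ j, C.c a i j * v j) • sr i := by
  funext k
  by_cases h : k = i
  · subst h; simp [sigma]
  · simp [sigma, h]

theorem sigma_sigma (C : CartanScheme I A) (a : A) (i : I) (v : I → ℤ) :
    C.sigma a i (C.sigma a i v) = v := by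
  rw [sigma_eq, sigma_eq]
  have h : ∑ j, C.c a i j * (v - (∑ j, C.c a i j * v j) • sr i) j
      = - ∑ j, C.c a i j * v j := by
    simp only [Pi.sub_apply, Pi.smul_apply, mul_sub, Finset.sum_sub_distrib, smul_eq_mul,
      Pi.single_apply, mul_ite, mul_one, mul_zero, Finset.sum_ite_eq', Finset.mem_univ, if_true,
      C.c_diag]
    ring
  rw [h]
  simp

/-- The simple reflection `σ_i^a` as a linear automorphism of `ℤ^I`. -/
def sref (C : CartanScheme I A) (a : A) (i : I) : LAut I :=
  LinearEquiv.ofInvolutive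
    { toFun := C.sigma a i
      map_add' := fun v w => by
        simp only [sigma_eq, Pi.add_apply, mul_add, Finset.sum_add_distrib, add_smul]
        abel
      map_smul' := fun r v => by
        simp only [sigma_eq, Pi.smul_apply, smul_eq_mul, RingHom.id_apply, smul_sub, smul_smul,
          Finset.mul_sum]
        congr 2
        exact Finset.sum_congr rfl fun j _ => by ring }
    (sigma_sigma C a i)

theorem sref_coe (C : CartanScheme I A) (a : A) (i : I) (v : I → ℤ) :
    sref C a i v = C.sigma a i v := rfl

theorem sref_rho (C : CartanScheme I A) (a : A) (i : I) : sref C (C.ρ i a) i = sref C a i := by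
  ext1 v
  simp only [sref_coe, sigma_eq, C.c_rho]

theorem sref_mul_self (C : CartanScheme I A) (a : A) (i : I) : sref C a i * sref C a i = 1 := by
  ext1 v
  exact sigma_sigma C a i v

theorem sref_inv (C : CartanScheme I A) (a : A) (i : I) : (sref C a i)⁻¹ = sref C a i :=
  inv_eq_of_mul_eq_one_left (sref_mul_self C a i)

theorem sref_apply_ne (C : CartanScheme I A) (a : A) {i k : I} (h : k ≠ i) (v : I → ℤ) :
    sref C a i v k = v k := by
  simp [sref_coe, sigma, h]

theorem sref_simple (C : CartanScheme I A) (a : A) (i : I) : sref C a i (sr i) = - sr i := by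
  rw [sref_coe, sigma_eq]
  simp only [Pi.single_apply, mul_ite, mul_one, mul_zero, Finset.sum_ite_eq', Finset.mem_univ,
    if_true, C.c_diag, two_smul]
  abel

theorem inv_app (f : LAut I) (v : I → ℤ) : f (f⁻¹ v) = v := f.apply_symm_apply v
theorem app_inv (f : LAut I) (v : I → ℤ) : f⁻¹ (f v) = v := f.symm_apply_apply v

/-- `HW C J n b a f`: the automorphism `f` is the map of a word of length `n` with letters in `J`
and with source `b` and target `a`. Words grow on the right, that is, at the source. -/
inductive HW (C : CartanScheme I A) (J : Set I) : ℕ → A → A → LAut I → Prop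
  | nil (a : A) : HW C J 0 a a 1
  | snoc {n : ℕ} {b a : A} {f : LAut I} (h : HW C J n b a f) {i : I} (hi : i ∈ J) :
      HW C J (n + 1) (C.ρ i b) a (f * sref C b i)

variable {C : CartanScheme I A} {J : Set I}

theorem HW.comp {n m : ℕ} {a b c : A} {f g : LAut I} (hf : HW C J n b a f)
    (hg : HW C J m c b g) : HW C J (n + m) c a (f * g) := by
  induction hg with
  | nil b => simpa using hf
  | snoc h hi ih =>
    rw [← mul_assoc]
    exact (ih hf).snoc hi

theorem HW.single (a : A) {i : I} (hi : i ∈ J) : HW C J 1 (C.ρ i a) a (sref C a i) := by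
  simpa using (HW.nil (C := C) (J := J) a).snoc hi

theorem HW.single' (a : A) {i : I} (hi : i ∈ J) : HW C J 1 a (C.ρ i a) (sref C a i) := by
  have := HW.single (C := C) (J := J) (C.ρ i a) hi
  rwa [C.ρ_invol, sref_rho] at this

theorem HW.inv {n : ℕ} {a b : A} {f : LAut I} (hf : HW C J n b a f) : HW C J n a b f⁻¹ := by
  induction hf with
  | nil b => simpa using HW.nil b
  | snoc h hi ih =>
    rw [mul_inv_rev, sref_inv, add_comm]
    exact (HW.single' _ hi).comp ih

theorem HW.mono {J' : Set I} (hJ : J ⊆ J') {n : ℕ} {a b : A} {f : LAut I}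
    (hf : HW C J n b a f) : HW C J' n b a f := by
  induction hf with
  | nil b => exact .nil b
  | snoc h hi ih => exact ih.snoc (hJ hi)

theorem hw_iff_word {n : ℕ} {a b : A} {f : LAut I} :
    HW C Set.univ n b a f ↔
      ∃ l : List I, l.length = n ∧ C.wordTarget b l = a ∧ C.wordMap b l = f := by
  constructor
  · intro h
    induction h with
    | nil a => exact ⟨[], rfl, rfl, rfl⟩
    | @snoc n b a f h i hi ih =>
      obtain ⟨l, h1, h2, h3⟩ := ih
      refine ⟨l ++ [i], by simp [h1], ?_, ?_⟩
      · rw [wordTarget_append]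
        simp [wordTarget, C.ρ_invol, h2]
      · rw [wordMap_append]
        simp only [wordTarget, wordMap, C.ρ_invol, h3]
        funext v
        change f (sref C (C.ρ i b) i v) = _
        rw [sref_rho]; rfl
  · rintro ⟨l, h1, h2, h3⟩
    induction l generalizing n a f with
    | nil =>
      obtain rfl : f = 1 := by ext1 v; rw [← h3]; rfl
      simp only [wordTarget] at h2
      subst h1 h2
      exact .nil _
    | cons i l ih =>
      set g : LAut I := (sref C (C.wordTarget b l) i)⁻¹ * f with hg
      have h4 : C.wordMap b l = g := by
        funext v
        have : f v = sref C (C.wordTarget b l) i (C.wordMap b l v) := by rw [← h3]; rfl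
        change _ = (sref C (C.wordTarget b l) i)⁻¹ (f v)
        rw [this, app_inv]
      have h5 := (HW.single' (C := C) (J := Set.univ) (C.wordTarget b l) (Set.mem_univ i)).comp
        (ih rfl rfl h4)
      rw [hg, mul_inv_cancel_left] at h5
      subst h1 h2
      rw [List.length_cons, add_comm]
      exact h5

theorem simple_mem_roots (a : A) (i : I) : sr i ∈ C.roots a := ⟨a, [], i, rfl, rfl⟩

theorem exists_linear (b : A) (l : List I) : ∃ f : LAut I, C.wordMap b l = f := by
  induction l with
  | nil => exact ⟨1, rfl⟩
  | cons i l ih =>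
    obtain ⟨f, hf⟩ := ih
    exact ⟨sref C (C.wordTarget b l) i * f, by simp only [wordMap, hf]; rfl⟩

theorem mem_roots_iff {a : A} {α : I → ℤ} :
    α ∈ C.roots a ↔ ∃ n b f j, HW C Set.univ n b a f ∧ α = f (sr j) := by
  constructor
  · rintro ⟨b, l, j, h1, h2⟩
    obtain ⟨f, hf⟩ := exists_linear (C := C) b l
    exact ⟨_, b, f, j, hw_iff_word.2 ⟨l, rfl, h1, hf⟩, by rw [h2, hf]⟩
  · rintro ⟨n, b, f, j, h, rfl⟩
    obtain ⟨l, _, h2, h3⟩ := hw_iff_word.1 h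
    exact ⟨b, l, j, h2, by rw [h3]⟩

theorem HW.map_roots {n : ℕ} {a b : A} {f : LAut I} (hf : HW C J n b a f) {α : I → ℤ}
    (hα : α ∈ C.roots b) : f α ∈ C.roots a := by
  obtain ⟨m, c, g, j, hg, rfl⟩ := mem_roots_iff.1 hα
  exact mem_roots_iff.2 ⟨_, c, f * g, j, (hf.mono (Set.subset_univ _)).comp hg, rfl⟩

theorem neg_mem_roots {a : A} {α : I → ℤ} (hα : α ∈ C.roots a) : -α ∈ C.roots a := by
  obtain ⟨m, c, g, j, hg, rfl⟩ := mem_roots_iff.1 hα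
  refine mem_roots_iff.2 ⟨_, _, _, j, hg.snoc (Set.mem_univ j), ?_⟩
  change _ = g (sref C c j (sr j))
  rw [sref_simple, map_neg]

theorem root_ne_zero {a : A} {α : I → ℤ} (hα : α ∈ C.roots a) : α ≠ 0 := by
  obtain ⟨m, c, g, j, hg, rfl⟩ := mem_roots_iff.1 hα
  intro h
  have := (LinearEquiv.map_eq_zero_iff g).1 h
  simpa using congrFun this j

theorem sr_nonneg (i : I) : (0 : I → ℤ) ≤ sr i := by
  intro k
  by_cases h : k = i
  · subst h; simp
  · simp [h]

theorem root_pos_or_neg (hC : C.IsFRS) {a : A} {α : I → ℤ} (hα : α ∈ C.roots a) :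
    0 ≤ α ∨ α ≤ 0 := hC.2.1 a α hα

theorem not_pos_neg {a : A} {α : I → ℤ} (hα : α ∈ C.roots a) (h1 : 0 ≤ α) (h2 : α ≤ 0) : False :=
  root_ne_zero hα (le_antisymm h2 h1)

theorem sref_pos (hC : C.IsFRS) {a : A} {α : I → ℤ} (hα : α ∈ C.roots a) (h0 : 0 ≤ α) {i : I}
    (hi : α ≠ sr i) : 0 ≤ sref C a i α := by
  have hr := (HW.single' (C := C) (J := Set.univ) a (Set.mem_univ i)).map_roots hα
  rcases root_pos_or_neg hC hr with h | h
  · exact h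
  exfalso
  -- all coordinates of `α` off `i` are unchanged by the reflection, hence vanish
  have hz : α = (α i) • Pi.single i 1 := by
    funext k
    by_cases hk : k = i
    · subst hk; simp
    · have h1 := h k
      rw [sref_apply_ne C a hk] at h1
      have h2 := h0 k
      simp [hk]
      exact le_antisymm h1 h2
  rcases hC.2.2.1 a i α hα ⟨_, hz⟩ with h1 | h1
  · exact hi h1
  · have h2 := h0 i
    rw [h1] at h2
    simp at h2

theorem sref_sr (C : CartanScheme I A) (a : A) (i j : I) :
    sref C a i (sr j) = sr j - C.c a i j • sr i := by
  rw [sref_coe, sigma_eq]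
  simp [Pi.single_apply]

/-! ### Inversion sets -/

/-- The inversion set of a morphism `f` with target `a`: the positive roots at `a` which `f⁻¹`
makes negative. -/
def invSet (C : CartanScheme I A) (a : A) (f : LAut I) : Set (I → ℤ) :=
  {α | α ∈ C.roots a ∧ 0 ≤ α ∧ f⁻¹ α ≤ 0}

theorem inv_finite (hC : C.IsFRS) (a : A) (f : LAut I) : (invSet C a f).Finite :=
  (hC.1 a).subset fun _ h => h.1

theorem inv_one (a : A) : invSet C a 1 = ∅ := by
  ext α
  simp only [Set.mem_empty_iff_false, iff_false]
  rintro ⟨h1, h2, h3⟩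
  exact not_pos_neg h1 h2 h3

theorem HW.mem_inv {n : ℕ} {a b : A} {f : LAut I} (hf : HW C J n b a f) {γ : I → ℤ}
    (hγ : γ ∈ C.roots b) (h : γ ≤ 0) (h' : 0 ≤ f γ) : f γ ∈ invSet C a f :=
  ⟨hf.map_roots hγ, h', by rwa [app_inv]⟩

theorem inv_snoc_pos (hC : C.IsFRS) {n : ℕ} {a b : A} {f : LAut I} (hf : HW C J n b a f) {i : I}
    (hi : 0 ≤ f (sr i)) : invSet C a (f * sref C b i) = insert (f (sr i)) (invSet C a f) := by
  have key : ∀ α, (f * sref C b i)⁻¹ α = sref C b i (f⁻¹ α) := fun α => by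
    rw [mul_inv_rev, sref_inv]; rfl
  ext α
  rw [Set.mem_insert_iff]
  constructor
  · rintro ⟨h1, h2, h3⟩
    rw [key] at h3
    have hr := hf.inv.map_roots h1
    rcases root_pos_or_neg hC hr with h | h
    · by_cases hα : f⁻¹ α = sr i
      · left; rw [← hα, inv_app]
      · exact absurd h3 fun h3 => not_pos_neg
          ((HW.single' (C := C) (J := Set.univ) b (Set.mem_univ i)).map_roots hr)
          (sref_pos hC hr h hα) h3
    · exact Or.inr ⟨h1, h2, h⟩
  · rintro (rfl | ⟨h1, h2, h3⟩)
    · refine ⟨hf.map_roots (simple_mem_roots b i), hi, ?_⟩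
      rw [key, app_inv, sref_simple]
      exact neg_nonpos.2 (sr_nonneg i)
    · refine ⟨h1, h2, ?_⟩
      rw [key]
      have hr := neg_mem_roots (hf.inv.map_roots h1)
      have := sref_pos (i := i) hC hr (neg_nonneg.2 h3) ?_
      · rw [map_neg] at this
        exact neg_nonneg.1 this
      · intro h
        have : α = - f (sr i) := by rw [← h, map_neg, neg_neg, inv_app]
        rw [this] at h1 h2
        exact not_pos_neg h1 h2 (neg_nonpos.2 hi)

theorem ncard_snoc_pos (hC : C.IsFRS) {n : ℕ} {a b : A} {f : LAut I} (hf : HW C J n b a f) {i : I}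
    (hi : 0 ≤ f (sr i)) : (invSet C a (f * sref C b i)).ncard = (invSet C a f).ncard + 1 := by
  rw [inv_snoc_pos hC hf hi, Set.ncard_insert_of_notMem _ (inv_finite hC a f)]
  rintro ⟨-, -, h⟩
  rw [app_inv] at h
  exact not_pos_neg (simple_mem_roots (C := C) a i) (sr_nonneg i) h

theorem ncard_snoc_neg (hC : C.IsFRS) {n : ℕ} {a b : A} {f : LAut I} (hf : HW C Set.univ n b a f)
    {i : I} (hi : f (sr i) ≤ 0) :
    (invSet C a (f * sref C b i)).ncard + 1 = (invSet C a f).ncard := by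
  have h := ncard_snoc_pos (i := i) hC (hf.snoc (Set.mem_univ i)) (by
    change 0 ≤ f (sref C b i (sr i))
    rw [sref_simple, map_neg]
    exact neg_nonneg.2 hi)
  rw [sref_rho, mul_assoc, sref_mul_self, mul_one] at h
  exact h.symm

theorem ncard_le (hC : C.IsFRS) {n : ℕ} {a b : A} {f : LAut I} (hf : HW C Set.univ n b a f) :
    (invSet C a f).ncard ≤ n := by
  induction hf with
  | nil a => simp [inv_one]
  | @snoc n b a f h i hi ih =>
    rcases root_pos_or_neg hC (h.map_roots (simple_mem_roots b i)) with h1 | h1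
    · have := ncard_snoc_pos hC h h1; omega
    · have := ncard_snoc_neg hC h h1; omega

/-- The inversion set of `g⁻¹f` corresponds, up to signs, to the symmetric difference of the
inversion sets of `f` and `g`. -/
theorem ncard_inv_mul (hC : C.IsFRS) {n m : ℕ} {a b c : A} {f g : LAut I}
    (hf : HW C Set.univ n c a f) (hg : HW C Set.univ m b a g) :
    (invSet C b (g⁻¹ * f)).ncard =
      (invSet C a f \ invSet C a g).ncard + (invSet C a g \ invSet C a f).ncard := by
  have key : ∀ α, (g⁻¹ * f)⁻¹ α = f⁻¹ (g α) := fun α => by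
    rw [mul_inv_rev, inv_inv]; rfl
  have h : invSet C b (g⁻¹ * f) = (⇑(g⁻¹) '' (invSet C a f \ invSet C a g)) ∪
      ((fun v => - g⁻¹ v) '' (invSet C a g \ invSet C a f)) := by
    ext γ
    constructor
    · rintro ⟨h1, h2, h3⟩
      rw [key] at h3
      have hr := hg.map_roots h1
      rcases root_pos_or_neg hC hr with h | h
      · refine Or.inl ⟨g γ, ⟨⟨hr, h, h3⟩, ?_⟩, app_inv g γ⟩
        rintro ⟨-, -, h4⟩
        rw [app_inv] at h4
        exact not_pos_neg h1 h2 h4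
      · refine Or.inr ⟨-g γ, ⟨⟨neg_mem_roots hr, neg_nonneg.2 h, ?_⟩, ?_⟩, ?_⟩
        · rw [map_neg, app_inv]; exact neg_nonpos.2 h2
        · rintro ⟨-, -, h4⟩
          rw [map_neg] at h4
          exact not_pos_neg (hf.inv.map_roots hr) (neg_nonpos.1 h4) h3
        · simp only [map_neg, app_inv, neg_neg]
    · rintro (⟨β, ⟨⟨h1, h2, h3⟩, h4⟩, rfl⟩ | ⟨β, ⟨⟨h1, h2, h3⟩, h4⟩, rfl⟩)
      · have hr := hg.inv.map_roots h1
        refine ⟨hr, ?_, by rwa [key, inv_app]⟩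
        exact (root_pos_or_neg hC hr).resolve_right fun h => h4 ⟨h1, h2, h⟩
      · have hr := hg.inv.map_roots h1
        refine ⟨neg_mem_roots hr, neg_nonneg.2 h3, ?_⟩
        simp only [key, map_neg, inv_app]
        exact neg_nonpos.2 ((root_pos_or_neg hC (hf.inv.map_roots h1)).resolve_right
          fun h => h4 ⟨h1, h2, h⟩)
  rw [h, Set.ncard_union_eq ?_ ((inv_finite hC a f).sdiff.image _) ((inv_finite hC a g).sdiff.image _)]
  · rw [Set.ncard_image_of_injective _ (g⁻¹).injective,
      Set.ncard_image_of_injective _ fun x y h => (g⁻¹).injective (neg_injective h)]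
  · rw [Set.disjoint_left]
    rintro _ ⟨β, ⟨⟨h1, h2, h3⟩, h4⟩, rfl⟩ ⟨β', ⟨⟨h1', h2', h3'⟩, h4'⟩, h⟩
    have : β = - β' := by
      have := congrArg g h
      simp only [map_neg, inv_app] at this
      exact this.symm
    rw [this] at h2
    exact not_pos_neg h1' h2' (neg_nonneg.1 h2)

theorem eq_sum_sr {v : I → ℤ} : v = ∑ i, v i • sr i := by
  funext k
  simp [Finset.sum_apply, Pi.single_apply]

/-- A morphism with an inversion has a right descent. -/
theorem exists_descent (hC : C.IsFRS) {n : ℕ} {a b : A} {f : LAut I} (hf : HW C J n b a f)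
    (h : (invSet C a f).Nonempty) : ∃ i, f (sr i) ≤ 0 := by
  by_contra! hcon
  obtain ⟨α, h1, h2, h3⟩ := h
  have hpos : ∀ i, 0 ≤ f (sr i) := fun i =>
    (root_pos_or_neg hC (hf.map_roots (simple_mem_roots b i))).resolve_right (hcon i)
  have : α = ∑ i, (f⁻¹ α) i • f (sr i) := by
    conv_lhs => rw [← inv_app f α, eq_sum_sr (v := f⁻¹ α)]
    simp only [map_sum, map_smul]
  refine not_pos_neg h1 h2 ?_
  rw [this]
  exact Finset.sum_nonpos fun i _ => smul_nonpos_of_nonpos_of_nonneg (h3 i) (hpos i)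

/-! ### Rank two: alternating words and the Coxeter relations -/

/-- The positive roots at `b` in the span of `α_i` and `α_j`. -/
def Phi (C : CartanScheme I A) (b : A) (i j : I) : Set (I → ℤ) :=
  C.roots b ∩ {α | ∃ m n : ℕ, α = (m : ℤ) • Pi.single i 1 + (n : ℤ) • Pi.single j 1}

theorem Phi_comm (b : A) (i j : I) : Phi C b i j = Phi C b j i := by
  ext α
  constructor <;> rintro ⟨h, m, n, rfl⟩ <;> exact ⟨h, n, m, add_comm _ _⟩

theorem Phi_nonneg {b : A} {i j : I} {α : I → ℤ} (h : α ∈ Phi C b i j) : 0 ≤ α := by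
  obtain ⟨-, m, n, rfl⟩ := h
  exact add_nonneg (smul_nonneg (by positivity) (sr_nonneg i))
    (smul_nonneg (by positivity) (sr_nonneg j))

/-- A map negative on `α_i` and `α_j` is negative on `Phi C b i j`. -/
theorem Phi_map_nonpos {b : A} {i j : I} {α : I → ℤ} (h : α ∈ Phi C b i j) (f : LAut I)
    (hi : f (sr i) ≤ 0) (hj : f (sr j) ≤ 0) : f α ≤ 0 := by
  obtain ⟨-, m, n, rfl⟩ := h
  rw [map_add, map_smul, map_smul]
  exact add_nonpos (smul_nonpos_of_nonneg_of_nonpos (by positivity) hi)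
    (smul_nonpos_of_nonneg_of_nonpos (by positivity) hj)

theorem Phi_map_nonneg {b : A} {i j : I} {α : I → ℤ} (h : α ∈ Phi C b i j) (f : LAut I)
    (hi : 0 ≤ f (sr i)) (hj : 0 ≤ f (sr j)) : 0 ≤ f α := by
  obtain ⟨-, m, n, rfl⟩ := h
  rw [map_add, map_smul, map_smul]
  exact add_nonneg (smul_nonneg (by positivity) hi) (smul_nonneg (by positivity) hj)

theorem mem_Phi {b : A} {i j : I} (hij : i ≠ j) {α : I → ℤ} (h : α ∈ C.roots b) (h0 : 0 ≤ α)
    (hk : ∀ k, k ≠ i → k ≠ j → α k = 0) : α ∈ Phi C b i j := by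
  refine ⟨h, (α i).toNat, (α j).toNat, ?_⟩
  rw [Int.toNat_of_nonneg (h0 i), Int.toNat_of_nonneg (h0 j)]
  funext k
  by_cases h1 : k = i
  · subst h1; simp [hij]
  · by_cases h2 : k = j
    · subst h2; simp [hij.symm]
    · simp [h1, h2, hk k h1 h2]

theorem sr_left_mem_Phi (b : A) (i j : I) : sr i ∈ Phi C b i j :=
  ⟨simple_mem_roots b i, 1, 0, by simp⟩

theorem sr_right_mem_Phi (b : A) (i j : I) : sr j ∈ Phi C b i j :=
  ⟨simple_mem_roots b j, 0, 1, by simp⟩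

theorem two_le_ncard_Phi (hC : C.IsFRS) (b : A) {i j : I} (hij : i ≠ j) :
    2 ≤ (Phi C b i j).ncard := by
  have h : ({sr i, sr j} : Set (I → ℤ)).ncard = 2 := Set.ncard_pair fun h => by
    simpa [hij] using congrFun h i
  rw [← h]
  refine Set.ncard_le_ncard ?_ ((hC.1 b).subset Set.inter_subset_left)
  rintro _ (rfl | rfl)
  · exact sr_left_mem_Phi b i j
  · exact sr_right_mem_Phi b i j

theorem HW.apply_off {n : ℕ} {a b : A} {f : LAut I} {i j : I} (hf : HW C {i, j} n b a f) {k : I}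
    (hi : k ≠ i) (hj : k ≠ j) (v : I → ℤ) : f v k = v k := by
  induction hf generalizing v with
  | nil a => rfl
  | snoc h hl ih =>
    rw [LinearEquiv.mul_apply, ih, sref_apply_ne]
    rcases hl with rfl | rfl
    · exact hi
    · exact hj

theorem inv_subset_Phi {n : ℕ} {a b : A} {f : LAut I} {i j : I} (hij : i ≠ j)
    (hf : HW C {i, j} n b a f) : invSet C a f ⊆ Phi C a i j := by
  rintro α ⟨h1, h2, h3⟩
  refine mem_Phi hij h1 h2 fun k hi hj => ?_
  have := h3 k
  rw [hf.inv.apply_off hi hj] at this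
  exact le_antisymm this (h2 k)

/-- The `s`-th letter of the alternating word `i, j, i, …`. -/
def altL (i j : I) (s : ℕ) : I := if Even s then i else j

/-- The source of the alternating word `i, j, i, …` of length `s` with target `b`. -/
def altO (C : CartanScheme I A) (b : A) (i j : I) : ℕ → A
  | 0 => b
  | s + 1 => C.ρ (altL i j s) (altO C b i j s)

/-- The map of the alternating word `i, j, i, …` of length `s` with target `b`. -/
def altX (C : CartanScheme I A) (b : A) (i j : I) : ℕ → LAut I
  | 0 => 1
  | s + 1 => altX C b i j s * sref C (altO C b i j s) (altL i j s)

theorem altL_mem (i j : I) (s : ℕ) : altL i j s ∈ ({i, j} : Set I) := by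
  unfold altL; split_ifs <;> simp

theorem altL_cases (i j : I) (s : ℕ) :
    (altL i j s = i ∧ altL i j (s + 1) = j) ∨ (altL i j s = j ∧ altL i j (s + 1) = i) := by
  unfold altL
  rcases Nat.even_or_odd s with h | h
  · simp [h, Nat.even_add_one]
  · simp [Nat.not_even_iff_odd.2 h, Nat.even_add_one]

theorem alt_hw (b : A) (i j : I) (s : ℕ) :
    HW C {i, j} s (altO C b i j s) b (altX C b i j s) := by
  induction s with
  | zero => exact .nil b
  | succ s ih => exact ih.snoc (altL_mem i j s)

/-- Splitting off the first letter of an alternating word. -/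
theorem alt_tail (b : A) (i j : I) (s : ℕ) :
    ∃ Y, altX C b i j (s + 1) = sref C b i * Y ∧
      HW C {i, j} s (altO C b i j (s + 1)) (C.ρ i b) Y := by
  induction s with
  | zero =>
    refine ⟨1, by simp [altX, altO, altL], ?_⟩
    simpa [altO, altL] using HW.nil (C := C) (J := {i, j}) (C.ρ i b)
  | succ s ih =>
    obtain ⟨Y, h1, h2⟩ := ih
    refine ⟨Y * sref C (altO C b i j (s + 1)) (altL i j (s + 1)), ?_, h2.snoc (altL_mem i j _)⟩
    rw [altX, h1, mul_assoc]

/-- Up to the number of positive roots in the rank two subsystem, every letter of an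
alternating word adds an inversion. -/
theorem alt_main (hC : C.IsFRS) (b : A) {i j : I} (hij : i ≠ j) (s : ℕ) :
    (s ≤ (Phi C b i j).ncard → (invSet C b (altX C b i j s)).ncard = s) ∧
    (s < (Phi C b i j).ncard → 0 ≤ altX C b i j s (sr (altL i j s))) := by
  induction s with
  | zero => exact ⟨fun _ => by simp [altX, inv_one], fun _ => sr_nonneg _⟩
  | succ s ih =>
    have h1 : s + 1 ≤ (Phi C b i j).ncard → (invSet C b (altX C b i j (s + 1))).ncard = s + 1 := by
      intro hs
      rw [altX, ncard_snoc_pos hC (alt_hw b i j s) (ih.2 hs), ih.1 (by omega)]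
    refine ⟨h1, fun hs => ?_⟩
    have hw := alt_hw (C := C) b i j (s + 1)
    refine (root_pos_or_neg hC (hw.map_roots (simple_mem_roots _ _))).resolve_right fun hneg => ?_
    have hprev : altX C b i j (s + 1) (sr (altL i j s)) ≤ 0 := by
      rw [altX, LinearEquiv.mul_apply, sref_simple, map_neg]
      exact neg_nonpos.2 (ih.2 (by omega))
    have hboth : altX C b i j (s + 1) (sr i) ≤ 0 ∧ altX C b i j (s + 1) (sr j) ≤ 0 := by
      rcases altL_cases i j s with ⟨h2, h3⟩ | ⟨h2, h3⟩
      · rw [h2] at hprev; rw [h3] at hneg; exact ⟨hprev, hneg⟩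
      · rw [h2] at hprev; rw [h3] at hneg; exact ⟨hneg, hprev⟩
    -- otherwise the whole rank two subsystem is already inverted
    have hsub : Phi C b i j ⊆ invSet C b (altX C b i j (s + 1)) := by
      intro β hβ
      have hr := hw.inv.map_roots hβ.1
      refine ⟨hβ.1, Phi_nonneg hβ, ?_⟩
      refine (root_pos_or_neg hC hr).resolve_left fun h => ?_
      have hm : (altX C b i j (s + 1))⁻¹ β ∈ Phi C (altO C b i j (s + 1)) i j := by
        refine mem_Phi hij hr h fun k hi hj => ?_
        rw [hw.inv.apply_off hi hj]
        obtain ⟨-, m, n, rfl⟩ := hβ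
        simp [hi, hj]
      have := Phi_map_nonpos hm _ hboth.1 hboth.2
      rw [inv_app] at this
      exact not_pos_neg hβ.1 (Phi_nonneg hβ) this
    have := Set.ncard_le_ncard hsub (inv_finite hC _ _)
    rw [h1 hs.le] at this
    omega

theorem alt_inv (hC : C.IsFRS) (b : A) {i j : I} (hij : i ≠ j) :
    invSet C b (altX C b i j (Phi C b i j).ncard) = Phi C b i j := by
  refine Set.eq_of_subset_of_ncard_le (inv_subset_Phi hij (alt_hw b i j _)) ?_
    ((hC.1 b).subset Set.inter_subset_left)
  rw [(alt_main hC b hij _).1 le_rfl]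

/-- The two alternating words of length `m_{ij}` with target `b` have the same source: this is
condition (R4). -/
theorem altO_comm (hC : C.IsFRS) (b : A) {i j : I} (hij : i ≠ j) :
    altO C b i j (Phi C b i j).ncard = altO C b j i (Phi C b i j).ncard := by
  let P : I → Equiv.Perm A := fun i => ⟨C.ρ i, C.ρ i, C.ρ_invol i, C.ρ_invol i⟩
  have hP : ∀ i, P i * P i = 1 := fun i => Equiv.ext fun x => C.ρ_invol i x
  have heven : ∀ i j t, altO C b i j (2 * t) = ((P j * P i) ^ t) b := by
    intro i j t
    induction t with
    | zero => rfl
    | succ t ih =>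
      have h1 : altL i j (2 * t) = i := by simp [altL]
      have h2 : altL i j (2 * t + 1) = j := by simp [altL]
      rw [show 2 * (t + 1) = 2 * t + 1 + 1 by ring, altO, altO, h1, h2, ih, pow_succ']
      rfl
  have hodd : ∀ i j t, altO C b i j (2 * t + 1) = P i (((P j * P i) ^ t) b) := by
    intro i j t
    have h1 : altL i j (2 * t) = i := by simp [altL]
    rw [altO, heven, h1]
    rfl
  have hinv : P j * P i = (P i * P j)⁻¹ := by
    rw [mul_inv_rev, inv_eq_of_mul_eq_one_left (hP i), inv_eq_of_mul_eq_one_left (hP j)]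
  have hR : ((P i * P j) ^ (Phi C b i j).ncard) b = b := by
    have h := hC.2.2.2 b i j hij
    rw [Equiv.Perm.coe_pow]
    exact h
  generalize (Phi C b i j).ncard = m at hR ⊢
  obtain ⟨t, rfl | rfl⟩ := Nat.even_or_odd' m
  · rw [heven, heven, hinv, inv_pow, Equiv.Perm.inv_eq_iff_eq, ← Equiv.Perm.mul_apply,
      ← pow_add, ← two_mul, hR]
  · rw [hodd, hodd, hinv, inv_pow]
    have h : ((P i * P j) ^ t)⁻¹ b = P i (P j (((P i * P j) ^ t) b)) := by
      rw [Equiv.Perm.inv_eq_iff_eq]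
      change b = ((P i * P j) ^ t * (P i * P j * (P i * P j) ^ t)) b
      rw [← pow_succ', ← pow_add, ← add_assoc, ← two_mul, hR]
    rw [h, ← Equiv.Perm.mul_apply, hP]
    rfl

/-- The rank two determinant of the map of a word in `i` and `j` is the sign given by the parity
of its length. -/
theorem HW.det {n : ℕ} {a b : A} {f : LAut I} {i j : I} (hij : i ≠ j)
    (hf : HW C {i, j} n b a f) :
    f (sr i) i * f (sr j) j - f (sr i) j * f (sr j) i = (-1) ^ n := by
  induction hf with
  | nil a => simp [hij, hij.symm]
  | @snoc n b a f h l hl ih =>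
    simp only [LinearEquiv.mul_apply]
    rcases hl with rfl | rfl
    · rw [sref_simple, sref_sr]
      simp only [map_neg, map_sub, map_smul, Pi.neg_apply, Pi.sub_apply, Pi.smul_apply,
        smul_eq_mul, pow_succ, ← ih]
      ring
    · rw [sref_simple, sref_sr]
      simp only [map_neg, map_sub, map_smul, Pi.neg_apply, Pi.sub_apply, Pi.smul_apply,
        smul_eq_mul, pow_succ, ← ih]
      ring

/-- A nonnegative integer `2 × 2` matrix of determinant `1` with a nonnegative right inverse is
the identity. -/
theorem two_by_two {p q r s p' q' r' s' : ℤ} (hp : 0 ≤ p) (hq : 0 ≤ q) (hr : 0 ≤ r) (hs : 0 ≤ s)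
    (hp' : 0 ≤ p') (hq' : 0 ≤ q') (hr' : 0 ≤ r') (hs' : 0 ≤ s')
    (hd : p * s - q * r = 1) (h1 : p * p' + q * r' = 1) (h2 : p * q' + q * s' = 0)
    (h3 : r * p' + s * r' = 0) (h4 : r * q' + s * s' = 1) : p = 1 ∧ q = 0 ∧ r = 0 ∧ s = 1 := by
  have hps : 0 < p * s := by have := mul_nonneg hq hr; omega
  have hp0 : 0 < p := by
    rcases hp.lt_or_eq with h | h
    · exact h
    · rw [← h] at hps; simp at hps
  have hs0 : 0 < s := by
    rcases hs.lt_or_eq with h | h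
    · exact h
    · rw [← h] at hps; simp at hps
  have e1 : r' = 0 := by
    have := mul_nonneg hr hp'
    have := mul_nonneg hs hr'
    have h : s * r' = 0 := by omega
    exact (mul_eq_zero.1 h).resolve_left hs0.ne'
  have e2 : p * p' = 1 := by rw [e1] at h1; simpa using h1
  have e3 : p = 1 := Int.eq_one_of_mul_eq_one_right hp e2
  have e4 : p' = 1 := by rw [e3] at e2; simpa using e2
  have e5 : r = 0 := by rw [e1, e4] at h3; simpa using h3
  have e6 : s = 1 := by rw [e3, e5] at hd; simpa using hd
  have hqs : q * s' = 0 := by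
    have := mul_nonneg hp hq'
    have := mul_nonneg hq hs'
    omega
  have e7 : s' = 1 := by rw [e5, e6] at h4; simpa using h4
  have e8 : q = 0 := by rw [e7] at hqs; simpa using hqs
  exact ⟨e3, e8, e5, e6⟩

theorem inv_nonneg_of_empty (hC : C.IsFRS) {n : ℕ} {a b : A} {f : LAut I} (hf : HW C J n b a f)
    (h : invSet C a f = ∅) (i : I) : 0 ≤ f⁻¹ (sr i) := by
  refine (root_pos_or_neg hC (hf.inv.map_roots (simple_mem_roots a i))).resolve_right fun h1 => ?_
  have : sr i ∈ invSet C a f := ⟨simple_mem_roots a i, sr_nonneg i, h1⟩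
  rw [h] at this
  exact this

/-- A product of an even number of reflections in `i` and `j` that preserves positivity in both
directions is the identity. Evenness excludes the exchange of `α_i` and `α_j`. -/
theorem eq_one_of_pos {n : ℕ} {a b : A} {z : LAut I} {i j : I} (hij : i ≠ j)
    (hz : HW C {i, j} n b a z) (hn : Even n) (h1 : ∀ k, 0 ≤ z (sr k))
    (h2 : ∀ k, 0 ≤ z⁻¹ (sr k)) : z = 1 := by
  have expand : ∀ {f : LAut I} {n a b}, HW C {i, j} n b a f → ∀ k, f (sr k) =
      (if k ≠ i ∧ k ≠ j then sr k else 0) + (f (sr k) i) • sr i + (f (sr k) j) • sr j := by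
    intro f n a b hf k
    funext l
    by_cases hli : l = i
    · subst hli
      by_cases hk : k = l
      · subst hk; simp [hij]
      · have : l ≠ k := fun h => hk h.symm
        split_ifs <;> simp [hij, this]
    · by_cases hlj : l = j
      · subst hlj
        by_cases hk : k = l
        · subst hk; simp [hij.symm]
        · have : l ≠ k := fun h => hk h.symm
          split_ifs <;> simp [hij.symm, this]
      · rw [hf.apply_off hli hlj]
        split_ifs with hk
        · simp [hli, hlj]
        · have : l ≠ k := by
            rintro rfl
            exact hk ⟨hli, hlj⟩
          simp [hli, hlj, this]
  have prod : ∀ k l, z⁻¹ (z (sr k)) l = z⁻¹ (if k ≠ i ∧ k ≠ j then sr k else 0) l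
      + z (sr k) i * z⁻¹ (sr i) l + z (sr k) j * z⁻¹ (sr j) l := by
    intro k l
    conv_lhs => rw [expand hz k]
    simp only [map_add, map_smul, Pi.add_apply, Pi.smul_apply, smul_eq_mul]
  simp only [app_inv] at prod
  have hd := hz.det hij
  rw [hn.neg_one_pow] at hd
  obtain ⟨e1, e2, e3, e4⟩ := two_by_two (h1 i i) (h1 i j) (h1 j i) (h1 j j)
    (h2 i i) (h2 i j) (h2 j i) (h2 j j) hd
    (by have := prod i i; simpa using this.symm) (by have := prod i j; simpa [hij] using this.symm)
    (by have := prod j i; simpa [hij] using this.symm) (by have := prod j j; simpa using this.symm)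
  have hi : z (sr i) = sr i := by rw [expand hz i, e1, e2]; simp
  have hj : z (sr j) = sr j := by rw [expand hz j, e3, e4]; simp
  have hi' : z⁻¹ (sr i) = sr i := by conv_lhs => rw [← hi, app_inv]
  have hj' : z⁻¹ (sr j) = sr j := by conv_lhs => rw [← hj, app_inv]
  have hall : ∀ k, z (sr k) = sr k := by
    intro k
    by_cases hki : k = i
    · rw [hki, hi]
    by_cases hkj : k = j
    · rw [hkj, hj]
    have p1 := prod k i
    have p2 := prod k j
    rw [if_pos ⟨hki, hkj⟩, hi', hj'] at p1 p2
    have a1 := h1 k i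
    have a2 := h1 k j
    have b1 := h2 k i
    have b2 := h2 k j
    simp [Ne.symm hki, Ne.symm hkj, hij, hij.symm] at p1 p2 a1 a2 b1 b2
    rw [expand hz k, if_pos ⟨hki, hkj⟩, show z (sr k) i = 0 by omega,
      show z (sr k) j = 0 by omega]
    simp
  ext1 v
  rw [eq_sum_sr (v := v)]
  simp only [map_sum, map_smul, hall]
  rfl

/-- The Coxeter relations: the two alternating words of length `m_{ij}` with target `b` define
the same morphism. -/
theorem altX_comm (hC : C.IsFRS) (b : A) {i j : I} (hij : i ≠ j) :
    altX C b i j (Phi C b i j).ncard = altX C b j i (Phi C b i j).ncard := by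
  have hinv := alt_inv hC b hij
  have hinv' := alt_inv hC b hij.symm
  have hO := altO_comm hC b hij
  rw [Phi_comm b j i] at hinv'
  generalize hm : (Phi C b i j).ncard = m at *
  have hx := alt_hw (C := C) b i j m
  have hy := alt_hw (C := C) b j i m
  rw [Set.pair_comm, ← hO] at hy
  set x := altX C b i j m
  set y := altX C b j i m
  have hz := hy.inv.comp hx
  have hz' := hx.inv.comp hy
  have hu : ({i, j} : Set I) ⊆ Set.univ := Set.subset_univ _
  have hempty : ∀ {f g : LAut I}, HW C {i, j} m (altO C b i j m) b f →
      HW C {i, j} m (altO C b i j m) b g → invSet C b f = invSet C b g →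
      invSet C (altO C b i j m) (g⁻¹ * f) = ∅ := by
    intro f g hf hg h
    rw [← Set.ncard_eq_zero (inv_finite hC _ _), ncard_inv_mul hC (hf.mono hu) (hg.mono hu), h]
    simp
  have h1 := inv_nonneg_of_empty hC hz (hempty hx hy (hinv.trans hinv'.symm))
  have h2 := inv_nonneg_of_empty hC hz' (hempty hy hx (hinv'.trans hinv.symm))
  have h3 : (x⁻¹ * y)⁻¹ = y⁻¹ * x := by rw [mul_inv_rev, inv_inv]
  rw [h3] at h2
  have := eq_one_of_pos hij hz ⟨m, rfl⟩ h2 h1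
  rwa [inv_mul_eq_one, eq_comm] at this

/-! ### Length is the number of inversions -/

/-- The deletion property at a right descent, for words with as many letters as inversions. -/
theorem exchange (hC : C.IsFRS) (n : ℕ) : ∀ {a b : A} {f : LAut I} {i : I},
    HW C Set.univ n b a f → (invSet C a f).ncard = n → f (sr i) ≤ 0 →
    ∃ k, k + 1 = n ∧ HW C Set.univ k (C.ρ i b) a (f * sref C b i) := by
  induction n using Nat.strong_induction_on with
  | _ n IH =>
  intro a b f i hf hd hi
  have hf0 := hf
  cases hf with
  | nil =>
    exact (not_pos_neg (simple_mem_roots (C := C) a i) (sr_nonneg i) hi).elim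
  | @snoc n' b' _ g hg j hj =>
    have hlast : g * sref C b' j * sref C (C.ρ j b') j = g := by
      rw [sref_rho, mul_assoc, sref_mul_self, mul_one]
    by_cases hij : i = j
    · subst hij
      exact ⟨n', rfl, by rwa [hlast, C.ρ_invol]⟩
    have hgj : 0 ≤ g (sr j) := by
      refine (root_pos_or_neg hC (hg.map_roots (simple_mem_roots b' j))).resolve_right fun h => ?_
      have h1 := ncard_snoc_neg hC hg h
      have h2 := ncard_le hC hg
      omega
    set b := C.ρ j b' with hb
    set f := g * sref C b' j with hfdef
    have hfj : f (sr j) ≤ 0 := by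
      rw [hfdef, LinearEquiv.mul_apply, sref_simple, map_neg]
      exact neg_nonpos.2 hgj
    have hji : j ≠ i := fun h => hij h.symm
    have hm2 := two_le_ncard_Phi hC b hji
    set m := (Phi C b j i).ncard with hm
    -- `f` is negative on the whole rank two subsystem, so that one can descend `m` times along
    -- the alternating word `j, i, j, …`
    have hdown : ∀ s, s + 1 ≤ m → ∃ k, k + (s + 1) = n' + 1 ∧
        HW C Set.univ k (altO C b j i (s + 1)) a (f * altX C b j i (s + 1)) ∧
        (invSet C a (f * altX C b j i (s + 1))).ncard = k := by
      intro s
      induction s with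
      | zero =>
        intro _
        refine ⟨n', rfl, ?_, ?_⟩
        · simp only [altX, altL, altO, one_mul, Even.zero, if_true]
          rwa [hlast, hb, C.ρ_invol]
        · have h1 := ncard_snoc_neg hC hf0 hfj
          simp only [altX, altL, altO, one_mul, Even.zero, if_true]
          omega
      | succ s ih =>
        intro hs
        obtain ⟨k, hk1, hk2, hk3⟩ := ih (by omega)
        have hw := alt_hw (C := C) b j i (s + 1)
        have hpos := (alt_main hC b hji (s + 1)).2 (by omega)
        have hmem : altX C b j i (s + 1) (sr (altL j i (s + 1))) ∈ Phi C b j i := by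
          refine mem_Phi hji (hw.map_roots (simple_mem_roots _ _)) hpos fun k h1 h2 => ?_
          rw [hw.apply_off h1 h2]
          rcases altL_mem j i (s + 1) with h | h <;> rw [h] <;> simp [h1, h2]
        have hneg : (f * altX C b j i (s + 1)) (sr (altL j i (s + 1))) ≤ 0 :=
          Phi_map_nonpos hmem f hfj hi
        obtain ⟨k', hk', hw'⟩ := IH k (by omega) hk2 hk3 hneg
        have hc := ncard_snoc_neg hC hk2 hneg
        rw [mul_assoc] at hw' hc
        exact ⟨k', by omega, hw', by rw [altX]; omega⟩
    obtain ⟨s, hs⟩ : ∃ s, m = s + 1 := ⟨m - 1, by omega⟩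
    obtain ⟨k, hk1, hk2, -⟩ := hdown s (by omega)
    -- and go up again along the other side of the Coxeter relation, leaving out its first letter
    have hX := altX_comm hC b hji
    have hO := altO_comm hC b hji
    rw [← hm, hs] at hX hO
    obtain ⟨Y, hY1, hY2⟩ := alt_tail (C := C) b i j s
    rw [hX, hO, hY1] at hk2
    have := hk2.comp (hY2.mono (Set.subset_univ _)).inv
    rw [← mul_assoc, mul_assoc, mul_inv_cancel, mul_one] at this
    exact ⟨k + s, by omega, this⟩

/-- Every morphism is realized by a word with as many letters as it has inversions. -/
theorem HW.reduce (hC : C.IsFRS) {n : ℕ} {a b : A} {f : LAut I} (hf : HW C Set.univ n b a f) :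
    HW C Set.univ (invSet C a f).ncard b a f := by
  induction hf with
  | nil a => rw [inv_one, Set.ncard_empty]; exact .nil a
  | @snoc n b a f h i hi ih =>
    rcases root_pos_or_neg hC (h.map_roots (simple_mem_roots b i)) with h1 | h1
    · rw [ncard_snoc_pos hC h h1]
      exact ih.snoc hi
    · obtain ⟨k, hk, hw⟩ := exchange hC _ ih rfl h1
      have := ncard_snoc_neg hC h h1
      rwa [show (invSet C a (f * sref C b i)).ncard = k by omega]

theorem HW.eq_of_inv_eq (hC : C.IsFRS) {n m : ℕ} {a b c : A} {f g : LAut I}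
    (hf : HW C Set.univ n b a f) (hg : HW C Set.univ m c a g) (h : invSet C a f = invSet C a g) :
    b = c ∧ f = g := by
  have h1 := (hg.inv.comp hf).reduce hC
  rw [ncard_inv_mul hC hf hg, h, Set.sdiff_self, Set.ncard_empty] at h1
  generalize hz : g⁻¹ * f = z at h1
  cases h1
  rw [inv_mul_eq_one] at hz
  exact ⟨rfl, hz.symm⟩

/-! ### The weak order as containment of inversion sets -/

theorem Mor.exists_hw (w : Mor C) :
    ∃ f : LAut I, ⇑f = w.toFun ∧ ∃ n, HW C Set.univ n w.src w.tgt f := by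
  obtain ⟨l, h1, h2⟩ := w.spec
  obtain ⟨f, hf⟩ := exists_linear (C := C) w.src l
  exact ⟨f, by rw [← hf, h2], _, hw_iff_word.2 ⟨l, rfl, h1, hf⟩⟩

/-- The linear automorphism underlying a morphism. -/
noncomputable def Mor.lin (w : Mor C) : LAut I := w.exists_hw.choose

theorem Mor.coe_lin (w : Mor C) : ⇑w.lin = w.toFun := w.exists_hw.choose_spec.1

theorem Mor.hw (w : Mor C) : ∃ n, HW C Set.univ n w.src w.tgt w.lin := w.exists_hw.choose_spec.2

/-- The inversion set of a morphism of the Weyl groupoid. -/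
noncomputable def Mor.inv (w : Mor C) : Set (I → ℤ) := invSet C w.tgt w.lin

theorem exists_mor {n : ℕ} {a b : A} {f : LAut I} (hf : HW C Set.univ n b a f) :
    ∃ w : Mor C, w.src = b ∧ w.tgt = a ∧ w.lin = f := by
  obtain ⟨l, -, h2, h3⟩ := hw_iff_word.1 hf
  refine ⟨⟨b, a, f, l, h2, h3⟩, rfl, rfl, ?_⟩
  exact DFunLike.coe_injective (Mor.coe_lin _)

theorem Mor.eq_of_inv_eq (hC : C.IsFRS) {u w : Mor C} (h : u.tgt = w.tgt) (h' : u.inv = w.inv) :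
    u = w := by
  obtain ⟨n, hu⟩ := u.hw
  obtain ⟨m, hw⟩ := w.hw
  rw [← h] at hw
  have h1 : invSet C u.tgt u.lin = invSet C u.tgt w.lin := by
    have := h'
    rwa [Mor.inv, Mor.inv, ← h] at this
  obtain ⟨h2, h3⟩ := hu.eq_of_inv_eq hC hw h1
  exact Mor.ext h2 h (by rw [← Mor.coe_lin, ← Mor.coe_lin, h3])

theorem len_eq (hC : C.IsFRS) (w : Mor C) : len w = w.inv.ncard := by
  obtain ⟨n, hw⟩ := w.hw
  have hset : {k | ∃ l : List I, Realizes w l ∧ l.length = k}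
      = {k | HW C Set.univ k w.src w.tgt w.lin} := by
    ext k
    simp only [Set.mem_ofPred_eq, hw_iff_word, Realizes, Mor.coe_lin]
    exact ⟨fun ⟨l, ⟨h1, h2⟩, h3⟩ => ⟨l, h3, h1, h2⟩, fun ⟨l, h3, h1, h2⟩ => ⟨l, ⟨h1, h2⟩, h3⟩⟩
  rw [len, hset]
  exact le_antisymm (Nat.sInf_le (hw.reduce hC))
    (le_csInf ⟨_, hw.reduce hC⟩ fun k hk => ncard_le hC hk)

theorem weakLe_iff (hC : C.IsFRS) {u w : Mor C} (h : u.tgt = w.tgt) :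
    weakLe u w ↔ u.inv ⊆ w.inv := by
  obtain ⟨n, hu⟩ := u.hw
  obtain ⟨m, hw⟩ := w.hw
  rw [← h] at hw
  have hwinv : w.inv = invSet C u.tgt w.lin := by rw [Mor.inv, h]
  have hcard := ncard_inv_mul hC hw hu
  rw [← hwinv, show invSet C u.tgt u.lin = u.inv from rfl] at hcard
  have hfin : u.inv.Finite := inv_finite hC _ _
  have hfin' : w.inv.Finite := inv_finite hC _ _
  have hi1 := Set.ncard_inter_add_ncard_sdiff_eq_ncard w.inv u.inv hfin'
  have hi2 := Set.ncard_inter_add_ncard_sdiff_eq_ncard u.inv w.inv hfin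
  rw [Set.inter_comm] at hi2
  constructor
  · rintro ⟨v, hv, hwv, hlen⟩
    -- `v = u⁻¹w`, and its length is the size of a symmetric difference
    have hvlin : v.lin = u.lin⁻¹ * w.lin := by
      rw [eq_inv_mul_iff_mul_eq]
      apply DFunLike.coe_injective
      rw [Mor.coe_lin w, hwv, Mor.comp, dif_pos hv]
      change u.lin ∘ v.lin = u.toFun ∘ v.toFun
      rw [Mor.coe_lin, Mor.coe_lin]
    rw [← hvlin, ← hv, show invSet C v.tgt v.lin = v.inv from rfl] at hcard
    rw [len_eq hC, len_eq hC, len_eq hC] at hlen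
    have h0 : (u.inv \ w.inv).ncard = 0 := by omega
    rw [Set.ncard_eq_zero hfin.sdiff] at h0
    exact Set.sdiff_eq_empty.1 h0
  · intro hsub
    obtain ⟨v, hv1, hv2, hv3⟩ := exists_mor (hu.inv.comp hw)
    refine ⟨v, hv2, ?_, ?_⟩
    · rw [Mor.comp, dif_pos hv2]
      refine Mor.ext hv1.symm h.symm ?_
      change w.toFun = u.toFun ∘ v.toFun
      rw [← Mor.coe_lin, ← Mor.coe_lin, ← Mor.coe_lin, hv3]
      funext x
      exact (inv_app u.lin (w.lin x)).symm
    · rw [len_eq hC, len_eq hC, len_eq hC,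
        show v.inv.ncard = _ by rw [Mor.inv, hv2, hv3]]
      rw [Set.sdiff_eq_empty.2 hsub, Set.ncard_empty] at hcard hi2
      omega

/-! ### Joins and meets -/

/-- If `N(u)` is strictly contained in `N(x)`, some upper cover `uσ_i` of `u` lies below `x`. -/
theorem exists_cover (hC : C.IsFRS) {u x : Mor C} (h : u.tgt = x.tgt) (hsub : u.inv ⊆ x.inv)
    (hne : u.inv ≠ x.inv) : ∃ i, 0 ≤ u.lin (sr i) ∧ u.lin (sr i) ∈ x.inv := by
  obtain ⟨n, hu⟩ := u.hw
  obtain ⟨m, hx⟩ := x.hw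
  rw [← h] at hx
  have hv := (hu.inv.comp hx).inv
  have hxinv : x.inv = invSet C u.tgt x.lin := by rw [Mor.inv, h]
  have hex : ∃ i, (u.lin⁻¹ * x.lin)⁻¹ (sr i) ≤ 0 := by
    refine exists_descent hC hv (Set.nonempty_iff_ne_empty.2 fun h0 => hne ?_)
    have h1 := ncard_inv_mul hC hu hx
    rw [mul_inv_rev, inv_inv] at h0
    rw [h0, Set.ncard_empty] at h1
    have h2 : (invSet C u.tgt x.lin \ invSet C u.tgt u.lin).ncard = 0 := by omega
    rw [Set.ncard_eq_zero (inv_finite hC _ _).sdiff, ← hxinv] at h2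
    exact hsub.antisymm (Set.sdiff_eq_empty.1 h2)
  obtain ⟨i, hi⟩ := hex
  have hi' : x.lin⁻¹ (u.lin (sr i)) ≤ 0 := by
    rw [mul_inv_rev, inv_inv] at hi
    exact hi
  have hr := hu.map_roots (simple_mem_roots u.src i)
  have hpos : 0 ≤ u.lin (sr i) := by
    refine (root_pos_or_neg hC hr).resolve_right fun hneg => ?_
    have h1 : - u.lin (sr i) ∈ u.inv := by
      refine ⟨neg_mem_roots hr, neg_nonneg.2 hneg, ?_⟩
      rw [map_neg, app_inv]
      exact neg_nonpos.2 (sr_nonneg i)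
    have h2 := (hsub h1).2.2
    rw [map_neg] at h2
    exact not_pos_neg (hx.inv.map_roots hr) (neg_nonpos.1 h2) hi'
  exact ⟨i, hpos, hxinv ▸ ⟨hr, hpos, hi'⟩⟩

/-- Two distinct upper covers `uσ_i`, `uσ_j` of `u` have a join, namely `u` times the longest
element of the rank two parabolic subgroupoid generated by `i` and `j`. -/
theorem local_join (hC : C.IsFRS) (u : Mor C) {i j : I} (hij : i ≠ j)
    (hi : 0 ≤ u.lin (sr i)) (hj : 0 ≤ u.lin (sr j)) :
    ∃ p : Mor C, p.tgt = u.tgt ∧ u.inv ⊆ p.inv ∧ u.lin (sr i) ∈ p.inv ∧ u.lin (sr j) ∈ p.inv ∧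
      ∀ z : Mor C, z.tgt = u.tgt → u.inv ⊆ z.inv → u.lin (sr i) ∈ z.inv → u.lin (sr j) ∈ z.inv →
        p.inv ⊆ z.inv := by
  obtain ⟨n, hu⟩ := u.hw
  have hX := (alt_hw (C := C) u.src i j (Phi C u.src i j).ncard).mono (Set.subset_univ _)
  have hXinv := alt_inv hC u.src hij
  generalize altX C u.src i j (Phi C u.src i j).ncard = X at hX hXinv
  obtain ⟨p, -, hp2, hp3⟩ := exists_mor (hu.comp hX)
  have hpinv : p.inv = {α | α ∈ C.roots u.tgt ∧ 0 ≤ α ∧ X⁻¹ (u.lin⁻¹ α) ≤ 0} := by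
    rw [Mor.inv, invSet, hp2, hp3, mul_inv_rev]
    rfl
  have hPhi : ∀ γ, γ ∈ Phi C u.src i j → u.lin γ ∈ p.inv := fun γ hγ => by
    rw [hpinv]
    refine ⟨hu.map_roots hγ.1, Phi_map_nonneg hγ _ hi hj, ?_⟩
    rw [app_inv]
    rw [← hXinv] at hγ
    exact hγ.2.2
  refine ⟨p, hp2, ?_, hPhi _ (sr_left_mem_Phi _ _ _), hPhi _ (sr_right_mem_Phi _ _ _), ?_⟩
  · rintro β ⟨h1, h2, h3⟩
    have hr := neg_mem_roots (hu.inv.map_roots h1)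
    rw [hpinv]
    refine ⟨h1, h2, ?_⟩
    have := (root_pos_or_neg hC (hX.inv.map_roots hr)).resolve_right fun h => ?_
    · rw [map_neg] at this
      exact neg_nonneg.1 this
    · have hmem : - u.lin⁻¹ β ∈ Phi C u.src i j := hXinv ▸ ⟨hr, neg_nonneg.2 h3, h⟩
      have := Phi_map_nonneg hmem u.lin hi hj
      rw [map_neg, inv_app] at this
      exact not_pos_neg h1 h2 (neg_nonneg.1 this)
  · intro z hz hsub hzi hzj β hβ
    rw [hpinv] at hβ
    obtain ⟨h1, h2, h3⟩ := hβ
    have hr := hu.inv.map_roots h1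
    rcases root_pos_or_neg hC hr with h | h
    · have hmem : u.lin⁻¹ β ∈ Phi C u.src i j := hXinv ▸ ⟨hr, h, h3⟩
      refine ⟨hz ▸ h1, h2, ?_⟩
      have := Phi_map_nonpos hmem (z.lin⁻¹ * u.lin) hzi.2.2 hzj.2.2
      rwa [LinearEquiv.mul_apply, inv_app] at this
    · exact hsub ⟨h1, h2, h⟩

/-- The upper cover `uσ_i` of `u`. -/
theorem exists_up (hC : C.IsFRS) (u : Mor C) {i : I} (hi : 0 ≤ u.lin (sr i)) :
    ∃ w : Mor C, w.tgt = u.tgt ∧ w.inv = insert (u.lin (sr i)) u.inv ∧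
      w.inv.ncard = u.inv.ncard + 1 := by
  obtain ⟨n, hu⟩ := u.hw
  obtain ⟨w, -, h2, h3⟩ := exists_mor (hu.snoc (Set.mem_univ i))
  refine ⟨w, h2, ?_, ?_⟩
  · rw [Mor.inv, h2, h3, inv_snoc_pos hC hu hi]; rfl
  · rw [Mor.inv, h2, h3, ncard_snoc_pos hC hu hi]; rfl

/-- Any two morphisms above `u` have a join. Downward induction on `u`: pass to the
covers `uσ_i ≤ x` and `uσ_j ≤ y`, and take joins successively with `uσ_i ∨ uσ_j`. -/
theorem exists_join_above (hC : C.IsFRS) (a : A) (k : ℕ) : ∀ u x y : Mor C,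
    (C.roots a).ncard ≤ u.inv.ncard + k → u.tgt = a → x.tgt = a → y.tgt = a →
    u.inv ⊆ x.inv → u.inv ⊆ y.inv →
    ∃ z : Mor C, z.tgt = a ∧ x.inv ⊆ z.inv ∧ y.inv ⊆ z.inv ∧
      ∀ t : Mor C, t.tgt = a → x.inv ⊆ t.inv → y.inv ⊆ t.inv → z.inv ⊆ t.inv := by
  induction k with
  | zero =>
    intro u x y hk hu hx hy hux huy
    -- `N(u)` has at least as many elements as there are roots at `a`, so `N(x)` is not larger
    have hxa : x.inv ⊆ C.roots a := fun α h => hx ▸ h.1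
    have h1 : x.inv ⊆ u.inv := by
      have hle := Set.ncard_le_ncard hxa (hC.1 a)
      exact (Set.eq_of_subset_of_ncard_le hux (by omega) (inv_finite hC _ _)).symm.subset
    exact ⟨y, hy, h1.trans huy, subset_rfl, fun t _ _ h => h⟩
  | succ k ih =>
    intro u x y hk hu hx hy hux huy
    by_cases hxe : u.inv = x.inv
    · exact ⟨y, hy, hxe ▸ huy, subset_rfl, fun t _ _ h => h⟩
    by_cases hye : u.inv = y.inv
    · exact ⟨x, hx, subset_rfl, hye ▸ hux, fun t _ h _ => h⟩
    obtain ⟨i, hi, hix⟩ := exists_cover hC (hu.trans hx.symm) hux hxe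
    obtain ⟨j, hj, hjy⟩ := exists_cover hC (hu.trans hy.symm) huy hye
    obtain ⟨ui, hui1, hui2, hui3⟩ := exists_up hC u hi
    obtain ⟨uj, huj1, huj2, huj3⟩ := exists_up hC u hj
    have huix : ui.inv ⊆ x.inv := hui2 ▸ Set.insert_subset hix hux
    have hujy : uj.inv ⊆ y.inv := huj2 ▸ Set.insert_subset hjy huy
    by_cases hij : i = j
    · subst hij
      exact ih ui x y (by omega) (hui1.trans hu) hx hy huix
        (hui2 ▸ Set.insert_subset hjy huy)
    obtain ⟨p, hp1, hp2, hp3, hp4, hp5⟩ := local_join hC u hij hi hj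
    obtain ⟨q, hq1, hq2, hq3, hq4⟩ := ih ui x p (by omega) (hui1.trans hu) hx (hp1.trans hu) huix
      (hui2 ▸ Set.insert_subset hp3 hp2)
    obtain ⟨r, hr1, hr2, hr3, hr4⟩ := ih uj q y (by omega) (huj1.trans hu) hq1 hy
      ((huj2 ▸ Set.insert_subset hp4 hp2 : uj.inv ⊆ p.inv).trans hq3) hujy
    refine ⟨r, hr1, hq2.trans hr2, hr3, fun t ht htx hty => ?_⟩
    exact hr4 t ht (hq4 t ht htx (hp5 t (ht.trans hu.symm) (hux.trans htx) (htx hix) (hty hjy))) hty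

theorem exists_bot (C : CartanScheme I A) (a : A) : ∃ w : Mor C, w.tgt = a ∧ w.inv = ∅ := by
  obtain ⟨w, -, h2, h3⟩ := exists_mor (HW.nil (C := C) (J := Set.univ) a)
  exact ⟨w, h2, by rw [Mor.inv, h3, inv_one]⟩

/-- Every finite set of morphisms with target `a` has a join, the empty set included. -/
theorem exists_join_finite (hC : C.IsFRS) (a : A) (S : Set (Mor C)) (hfin : S.Finite) :
    S ⊆ {w : Mor C | w.tgt = a} → ∃ z : Mor C, z.tgt = a ∧ (∀ u ∈ S, u.inv ⊆ z.inv) ∧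
      ∀ t : Mor C, t.tgt = a → (∀ u ∈ S, u.inv ⊆ t.inv) → z.inv ⊆ t.inv := by
  obtain ⟨e, he1, he2⟩ := exists_bot C a
  induction S, hfin using Set.Finite.induction_on with
  | empty => exact fun _ => ⟨e, he1, by simp, fun t _ _ => by simp [he2]⟩
  | @insert w S _ _ ih =>
    intro hS
    obtain ⟨z, hz1, hz2, hz3⟩ := ih ((Set.subset_insert w S).trans hS)
    obtain ⟨r, hr1, hr2, hr3, hr4⟩ := exists_join_above hC a (C.roots a).ncard e w z (by omega) he1
      (hS (Set.mem_insert w S)) hz1 (by simp [he2]) (by simp [he2])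
    refine ⟨r, hr1, ?_, fun t ht h => ?_⟩
    · rintro u (rfl | hu)
      · exact hr2
      · exact (hz2 u hu).trans hr3
    · exact hr4 t ht (h w (Set.mem_insert w S))
        (hz3 t ht fun u hu => h u (Set.mem_insert_of_mem w hu))

theorem finite_hom (hC : C.IsFRS) (a : A) : {w : Mor C | w.tgt = a}.Finite := by
  refine Set.Finite.of_finite_image ((hC.1 a).finite_subsets.subset ?_) (f := Mor.inv) ?_
  · rintro _ ⟨w, rfl, rfl⟩
    exact fun α h => h.1
  · intro u hu w hw h
    exact Mor.eq_of_inv_eq hC (hu.trans hw.symm) h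

end CartanScheme

/-- `(Hom(-,a), ≤_R)` is a meet semilattice: every finite nonempty subset
has a meet; and in fact a lattice: every finite nonempty subset also has a join. -/
theorem weak_order_meet_semilattice (C : CartanScheme I A) (hC : C.IsFRS) (a : A) :
    (∀ S : Set (Mor C), S ⊆ {w : Mor C | w.tgt = a} → S.Finite → S.Nonempty →
      ∃ z : Mor C, z.tgt = a ∧ (∀ u ∈ S, weakLe z u) ∧
        ∀ y : Mor C, y.tgt = a → (∀ u ∈ S, weakLe y u) → weakLe y z) ∧
    (∀ S : Set (Mor C), S ⊆ {w : Mor C | w.tgt = a} → S.Finite → S.Nonempty →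
      ∃ z : Mor C, z.tgt = a ∧ (∀ u ∈ S, weakLe u z) ∧
        ∀ y : Mor C, y.tgt = a → (∀ u ∈ S, weakLe u y) → weakLe z y) := by
  have key : ∀ {u w : Mor C}, u.tgt = a → w.tgt = a → (weakLe u w ↔ u.inv ⊆ w.inv) :=
    fun hu hw => weakLe_iff hC (hu.trans hw.symm)
  constructor
  · intro S hS _ _
    -- the meet is the join of the finite set of lower bounds
    obtain ⟨z, hz1, hz2, hz3⟩ := exists_join_finite hC a
      {w | w.tgt = a ∧ ∀ u ∈ S, w.inv ⊆ u.inv} ((finite_hom hC a).subset fun w h => h.1)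
      fun w h => h.1
    refine ⟨z, hz1, fun u hu => ?_, fun y hy h => ?_⟩
    · exact (key hz1 (hS hu)).2 (hz3 u (hS hu) fun w hw => hw.2 u hu)
    · exact (key hy hz1).2 (hz2 y ⟨hy, fun u hu => (key hy (hS hu)).1 (h u hu)⟩)
  · intro S hS hfin _
    obtain ⟨z, hz1, hz2, hz3⟩ := exists_join_finite hC a S hfin hS
    refine ⟨z, hz1, fun u hu => (key (hS hu) hz1).2 (hz2 u hu), fun y hy h => ?_⟩
    exact (key hz1 hy).2 (hz3 y hy fun u hu => (key (hS hu) hy).1 (h u hu))
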